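/- arXiv:1903.00236 — 2 statements merged into one kernel-verified Lean document; each statement's English description precedes it below -/
import Mathlib

section
/- Suppose X is complete, A is closed, I and φ are lower semicontinuous on A, φ is continuous at every point of Ω, and there exist c > I*, λ₀ > 0 and δ > 0 such that (i) I is Lipschitz continuous on an open set containing S_{λ₀}(c) ∩ Ω_δ, (ii) there exists a > 0 such that φ↓_A(x) ≤ −a for all x ∈ S_{λ₀}(c) ∩ (Ω_δ \ Ω), and (iii) Φ_{λ₀} is bounded below on A. Then there exists λ* ≥ 0 such that for every λ ≥ λ*: a point x* ∈ S_λ(c) is an inf-stationary point of Φ_λ on A if and only if x* ∈ Ω and x* is an inf-stationary point of I on Ω. -/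
open Filter Metric Set Topology
open scoped ENNReal NNReal

/-- The rate of steepest descent of `g : X → EReal` with respect to the set `K` at `x`. -/
noncomputable def rateOfDescent {X : Type*} [MetricSpace X] (g : X → EReal) (K : Set X)
    (x : X) : EReal :=
  Filter.liminf (fun y => (g y - g x) * (((dist y x)⁻¹ : ℝ) : EReal)) (nhdsWithin x (K \ {x}))

/-!
The proof rests on two comparisons near a point `x` of the sublevel set `S_λ(c)`, which for large
`λ` lies in `S_{λ₀}(c) ∩ Ω_δ` because `Φ_λ₀` is bounded below. There `I` is `L`-Lipschitz and `φ`
decreases at a rate greater than some `k > 0` off `Ω`; let `λ k ≥ L`. If `x ∉ Ω`, then along a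
direction of descent of `φ` the penalty term decreases faster than `I` can increase, so `x` is not
stationary for `Φ_λ`. If `x ∈ Ω`, Ekeland's variational principle applied to `φ` turns the descent
rate into an error bound `k d(y, Ω) ≤ φ y` near `x`, so that projecting `y` to `Ω` costs at most
`L d(y, Ω) ≤ λ φ y` in `I`, and stationarity of `I` on `Ω` passes to `Φ_λ` on `A`.
-/

section Ekeland

variable {X : Type*} [EMetricSpace X] {A : Set X} {φ : X → ℝ≥0∞} {k : ℝ≥0} {u v w : X}

/-- Ekeland's preorder: `EkelandLE φ k v u` says that moving from `u` to `v` lowers `φ` by at least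
`k` times the distance. -/
def EkelandLE (φ : X → ℝ≥0∞) (k : ℝ≥0) (v u : X) : Prop :=
  φ v + k * edist v u ≤ φ u

lemma EkelandLE.refl (φ : X → ℝ≥0∞) (k : ℝ≥0) (u : X) : EkelandLE φ k u u := by
  simp [EkelandLE]

lemma EkelandLE.trans (hwv : EkelandLE φ k w v) (hvu : EkelandLE φ k v u) : EkelandLE φ k w u :=
  calc φ w + k * edist w u
      ≤ φ w + k * (edist w v + edist v u) := by gcongr; exact edist_triangle _ _ _
    _ = (φ w + k * edist w v) + k * edist v u := by ring
    _ ≤ φ v + k * edist v u := by gcongr; exact hwv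
    _ ≤ φ u := hvu

lemma EkelandLE.le (h : EkelandLE φ k v u) : φ v ≤ φ u :=
  le_self_add.trans h

lemma EkelandLE.mul_edist_le (h : EkelandLE φ k v u) : k * edist v u ≤ φ u :=
  le_add_self.trans h

lemma EkelandLE.of_tendsto (hφ : LowerSemicontinuousOn φ A) {z : X} (hz : z ∈ A) {x : ℕ → X}
    (hxA : ∀ n, x n ∈ A) (hxz : Tendsto x atTop (𝓝 z))
    (hxu : ∀ᶠ n in atTop, EkelandLE φ k (x n) u) : EkelandLE φ k z u := by
  have hdist : Continuous fun w => (k : ℝ≥0∞) * edist w u :=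
    (ENNReal.continuous_const_mul ENNReal.coe_ne_top).comp (continuous_id.edist continuous_const)
  have hlsc := hφ.add (hdist.lowerSemicontinuous.lowerSemicontinuousOn A)
  have hxz' : Tendsto x atTop (𝓝[A] z) :=
    tendsto_nhdsWithin_iff.2 ⟨hxz, .of_forall hxA⟩
  by_contra hzu
  obtain ⟨n, hlt, hle⟩ := ((hxz'.eventually (hlsc z hz _ (not_le.1 hzu))).and hxu).exists
  exact hlt.not_ge hle

/-- Any near-minimizer of `φ` among the points below `u` will do. -/
lemma exists_ekelandLE_forall_edist_le (hk : k ≠ 0) (hu : u ∈ A) (hφu : φ u ≠ ⊤) {ε : ℝ≥0∞}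
    (hε : ε ≠ 0) :
    ∃ v ∈ A, EkelandLE φ k v u ∧ ∀ w ∈ A, EkelandLE φ k w v → edist w v ≤ ε := by
  have hk' : (k : ℝ≥0∞) ≠ 0 := ENNReal.coe_ne_zero.2 hk
  set S : Set X := {v ∈ A | EkelandLE φ k v u}
  have hinf : ⨅ v ∈ S, φ v ≠ ⊤ := ne_top_of_le_ne_top hφu (iInf₂_le u ⟨hu, .refl φ k u⟩)
  obtain ⟨v, ⟨hvA, hvu⟩, hv⟩ : ∃ v ∈ S, φ v < (⨅ v ∈ S, φ v) + k * ε := by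
    simpa only [iInf_lt_iff, exists_prop] using ENNReal.lt_add_right hinf (mul_ne_zero hk' hε)
  refine ⟨v, hvA, hvu, fun w hwA hwv => ?_⟩
  have hφw : φ w ≠ ⊤ := ne_top_of_le_ne_top hφu (hwv.trans hvu).le
  have hbound : φ w + k * edist w v ≤ φ w + k * ε :=
    calc φ w + k * edist w v ≤ φ v := hwv
      _ ≤ (⨅ v ∈ S, φ v) + k * ε := hv.le
      _ ≤ φ w + k * ε := by gcongr; exact iInf₂_le w ⟨hwA, hwv.trans hvu⟩
  exact (ENNReal.mul_le_mul_iff_right hk' ENNReal.coe_ne_top).1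
    ((ENNReal.add_le_add_iff_left hφw).1 hbound)

lemma exists_seq_ekelandLE (hk : k ≠ 0) {y : X} (hy : y ∈ A) (hφy : φ y ≠ ⊤) :
    ∃ x : ℕ → X, (∀ n, x n ∈ A) ∧ EkelandLE φ k (x 0) y ∧
      (∀ n, EkelandLE φ k (x (n + 1)) (x n)) ∧
      ∀ n, ∀ w ∈ A, EkelandLE φ k w (x n) → edist w (x n) ≤ 1 / 2 ^ n := by
  have hnext : ∀ (n : ℕ) (u : {u // u ∈ A ∧ φ u ≠ ⊤}), ∃ v : {u // u ∈ A ∧ φ u ≠ ⊤},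
      EkelandLE φ k v u ∧ ∀ w ∈ A, EkelandLE φ k w v → edist w v ≤ 1 / 2 ^ n := by
    rintro n ⟨u, hu, hφu⟩
    obtain ⟨v, hv, hvu, hmin⟩ :=
      exists_ekelandLE_forall_edist_le hk hu hφu (ε := 1 / 2 ^ n) (by simp)
    exact ⟨⟨v, hv, ne_top_of_le_ne_top hφu hvu.le⟩, hvu, hmin⟩
  choose next hle hmin using hnext
  let x : ℕ → {u // u ∈ A ∧ φ u ≠ ⊤} :=
    Nat.rec (next 0 ⟨y, hy, hφy⟩) fun n u => next (n + 1) u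
  refine ⟨fun n => (x n).1, fun n => (x n).2.1, hle 0 _, fun n => hle (n + 1) (x n), ?_⟩
  rintro (_ | n)
  · exact hmin 0 _
  · exact hmin (n + 1) (x n)

/-- Ekeland's variational principle. -/
theorem exists_ekelandLE_forall_lt (hA : IsComplete A) (hφ : LowerSemicontinuousOn φ A)
    (hk : k ≠ 0) {y : X} (hy : y ∈ A) (hφy : φ y ≠ ⊤) :
    ∃ z ∈ A, EkelandLE φ k z y ∧ ∀ w ∈ A, w ≠ z → φ z < φ w + k * edist w z := by
  obtain ⟨x, hxA, hx0, hsucc, hmin⟩ := exists_seq_ekelandLE hk hy hφy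
  have hanti : ∀ n m, n ≤ m → EkelandLE φ k (x m) (x n) := fun n m hnm =>
    Nat.le_induction (EkelandLE.refl φ k _) (fun m _ ih => (hsucc m).trans ih) m hnm
  have hcauchy : CauchySeq x :=
    cauchySeq_of_edist_le_geometric_two 1 ENNReal.one_ne_top fun n => by
      rw [edist_comm]
      exact hmin n _ (hxA (n + 1)) (hsucc n)
  obtain ⟨z, hzA, hxz⟩ := cauchySeq_tendsto_of_isComplete hA hxA hcauchy
  have hzx : ∀ n, EkelandLE φ k z (x n) := fun n =>
    .of_tendsto hφ hzA hxA hxz ((eventually_ge_atTop n).mono (hanti n))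
  refine ⟨z, hzA, (hzx 0).trans hx0, fun w hw hwz => not_le.1 fun hle => hwz ?_⟩
  have hlim : Tendsto (fun n : ℕ => (1 : ℝ≥0∞) / 2 ^ n) atTop (𝓝 0) := by
    simpa only [one_div, ENNReal.inv_pow] using
      ENNReal.tendsto_pow_atTop_nhds_zero_of_lt_one (r := 2⁻¹) (by simp)
  have hxw : Tendsto x atTop (𝓝 w) := by
    refine tendsto_iff_edist_tendsto_0.2 (tendsto_of_tendsto_of_tendsto_of_le_of_le
      tendsto_const_nhds hlim (fun _ => zero_le) fun n => ?_)
    rw [edist_comm]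
    exact hmin n w hw (EkelandLE.trans hle (hzx n))
  exact tendsto_nhds_unique hxw hxz

/-- The Ekeland point obtained from a starting point `y` near `x` can only be a zero of `φ`. -/
theorem eventually_exists_zero_mul_edist_le (hA : IsComplete A) (hφ : LowerSemicontinuousOn φ A)
    (hk : k ≠ 0) {x : X} (hφx : φ x = 0) (hcont : ContinuousWithinAt φ A x)
    (hdesc : ∀ᶠ z in 𝓝[A] x, φ z ≠ 0 → ∃ w ∈ A, φ w + k * edist w z < φ z) :
    ∀ᶠ y in 𝓝[A] x, ∃ z ∈ A, φ z = 0 ∧ k * edist z y ≤ φ y := by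
  have hk' : (k : ℝ≥0∞) ≠ 0 := ENNReal.coe_ne_zero.2 hk
  obtain ⟨R, hR, hdesc⟩ := EMetric.mem_nhdsWithin_iff.1 hdesc
  have hR2 : R / 2 ≠ 0 := (ENNReal.half_pos hR.ne').ne'
  have hsmall : ∀ᶠ y in 𝓝[A] x, φ y < k * (R / 2) := by
    refine hcont.eventually_lt_const ?_
    rw [hφx]
    exact pos_iff_ne_zero.2 (mul_ne_zero hk' hR2)
  have hball : ∀ᶠ y in 𝓝[A] x, edist y x < R / 2 :=
    mem_nhdsWithin_of_mem_nhds (Metric.eball_mem_nhds x (pos_iff_ne_zero.2 hR2))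
  filter_upwards [hsmall, hball, self_mem_nhdsWithin] with y hφy hyx hyA
  obtain ⟨z, hzA, hzy, hmin⟩ := exists_ekelandLE_forall_lt hA hφ hk hyA hφy.ne_top
  have hzy' : edist z y < R / 2 := lt_of_mul_lt_mul_left' (hzy.mul_edist_le.trans_lt hφy)
  have hzx : edist z x < R :=
    calc edist z x ≤ edist z y + edist y x := edist_triangle _ _ _
      _ < R / 2 + R / 2 := ENNReal.add_lt_add hzy' hyx
      _ = R := ENNReal.add_halves R
  refine ⟨z, hzA, ?_, hzy.mul_edist_le⟩
  by_contra hφz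
  obtain ⟨w, hwA, hwz⟩ := hdesc ⟨hzx, hzA⟩ hφz
  exact (hmin w hwA (by rintro rfl; simp at hwz)).not_gt hwz

end Ekeland

section RateOfDescent

lemma coe_le_sub_mul_inv_iff {u : EReal} {r t d : ℝ} (hd : 0 < d) :
    (t : EReal) ≤ (u - r) * ((d⁻¹ : ℝ) : EReal) ↔ ((r + t * d : ℝ) : EReal) ≤ u := by
  rw [EReal.coe_inv, ← div_eq_mul_inv,
    EReal.le_div_iff_mul_le (EReal.coe_pos.2 hd) (EReal.coe_ne_top d),
    EReal.le_sub_iff_add_le (.inl (EReal.coe_ne_bot r)) (.inl (EReal.coe_ne_top r)), add_comm r]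
  norm_cast

variable {X : Type*} [MetricSpace X] {g g' : X → EReal} {K K' : Set X} {x : X}

lemma rateOfDescent_anti (h : K ⊆ K') : rateOfDescent g K' x ≤ rateOfDescent g K x :=
  liminf_le_liminf_of_le (nhdsWithin_mono x (sdiff_subset_sdiff_left h))

lemma rateOfDescent_congr (hx : x ∈ K) (h : g =ᶠ[𝓝[K] x] g') :
    rateOfDescent g K x = rateOfDescent g' K x := by
  refine liminf_congr ((h.filter_mono (nhdsWithin_mono x sdiff_subset)).mono fun y hy => ?_)
  rw [hy, h.eq_of_nhdsWithin hx]

/-- The filter on the right is `𝓝[K] x` rather than `𝓝[K \ {x}] x`, which makes no difference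
because at `y = x` the inequality is an equality. -/
lemma le_rateOfDescent_iff {r s : ℝ} (hr : g x = r) :
    (s : EReal) ≤ rateOfDescent g K x ↔
      ∀ t < s, ∀ᶠ y in 𝓝[K] x, ((r + t * dist y x : ℝ) : EReal) ≤ g y := by
  have hquot : ∀ t : ℝ,
      (∀ᶠ y in 𝓝[K \ {x}] x, (t : EReal) ≤ (g y - g x) * (((dist y x)⁻¹ : ℝ) : EReal)) ↔
        ∀ᶠ y in 𝓝[K] x, ((r + t * dist y x : ℝ) : EReal) ≤ g y := by
    intro t
    rw [eventually_nhdsWithin_iff, eventually_nhdsWithin_iff]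
    refine eventually_congr (.of_forall fun y => ?_)
    rcases eq_or_ne y x with rfl | hyx
    · simp [hr]
    · simp only [Set.mem_sdiff, mem_singleton_iff, hyx, not_false_eq_true, and_true, hr,
        coe_le_sub_mul_inv_iff (dist_pos.2 hyx)]
  rw [rateOfDescent, le_liminf_iff']
  constructor
  · exact fun h t hts => (hquot t).1 (h t (EReal.coe_lt_coe_iff.2 hts))
  · intro h q hq
    obtain ⟨t, hqt, hts⟩ := EReal.lt_iff_exists_real_btwn.1 hq
    exact ((hquot t).2 (h t (EReal.coe_lt_coe_iff.1 hts))).mono fun y hy => hqt.le.trans hy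

lemma rateOfDescent_lt_iff {r s : ℝ} (hr : g x = r) :
    rateOfDescent g K x < s ↔
      ∃ t < s, ∃ᶠ y in 𝓝[K] x, g y < ((r + t * dist y x : ℝ) : EReal) := by
  rw [← not_le, le_rateOfDescent_iff hr]
  push Not
  rfl

lemma frequently_add_mul_edist_lt {φ : X → ℝ≥0∞} {k : ℝ≥0} (hφx : φ x ≠ ⊤)
    (h : rateOfDescent (fun y => (φ y : EReal)) K x < ((-k : ℝ) : EReal)) :
    ∃ᶠ y in 𝓝[K] x, φ y + k * edist y x < φ x := by
  obtain ⟨t, htk, ht⟩ := (rateOfDescent_lt_iff (g := fun y => (φ y : EReal))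
    (EReal.coe_ennreal_toReal hφx).symm).1 h
  refine ht.mono fun y hy => ?_
  have hφy : φ y ≠ ⊤ := fun htop => by simp [htop] at hy
  have hne : (k : ℝ≥0∞) * edist y x ≠ ⊤ := ENNReal.mul_ne_top ENNReal.coe_ne_top (edist_ne_top _ _)
  rw [← EReal.coe_ennreal_toReal hφy, EReal.coe_lt_coe_iff] at hy
  rw [← ENNReal.toReal_lt_toReal (ENNReal.add_ne_top.2 ⟨hφy, hne⟩) hφx, ENNReal.toReal_add hφy hne,
    ENNReal.toReal_mul, ENNReal.coe_toReal, ← dist_edist]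
  have : t * dist y x ≤ -k * dist y x := mul_le_mul_of_nonneg_right htk.le dist_nonneg
  linarith

theorem eventually_exists_zero_mul_edist_le_of_rateOfDescent_lt {A : Set X} {φ : X → ℝ≥0∞} {k : ℝ≥0}
    (hA : IsComplete A) (hφ : LowerSemicontinuousOn φ A) (hk : k ≠ 0) (hφx : φ x = 0)
    (hcont : ContinuousWithinAt φ A x)
    (hdesc : ∀ᶠ z in 𝓝[A] x, φ z ≠ 0 →
      rateOfDescent (fun y => (φ y : EReal)) A z < ((-k : ℝ) : EReal)) :
    ∀ᶠ y in 𝓝[A] x, ∃ z ∈ A, φ z = 0 ∧ k * edist z y ≤ φ y := by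
  have hfin : ∀ᶠ z in 𝓝[A] x, φ z < ⊤ := hcont.eventually_lt_const (by simp [hφx])
  refine eventually_exists_zero_mul_edist_le hA hφ hk hφx hcont ?_
  filter_upwards [hdesc, hfin] with z hz hφz hz0
  obtain ⟨w, hw, hwA⟩ := ((frequently_add_mul_edist_lt hφz.ne (hz hz0)).and_eventually
    self_mem_nhdsWithin).exists
  exact ⟨w, hwA, hw⟩

end RateOfDescent

section Penalty

/-- The penalty function `Φ_λ = I + λ φ`. -/
noncomputable def penaltyFunction {X : Type*} (I : X → EReal) (φ : X → ℝ≥0∞) (lam : ℝ)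
    (x : X) : EReal :=
  I x + (lam : EReal) * (φ x : EReal)

variable {X : Type*} {I : X → EReal} {f : X → ℝ} {φ : X → ℝ≥0∞} {lam lam₀ : ℝ} {x : X}

lemma penaltyFunction_of_eq_zero (hφx : φ x = 0) : penaltyFunction I φ lam x = I x := by
  simp [penaltyFunction, hφx]

lemma penaltyFunction_congr {I' : X → EReal} {l : Filter X} (h : I =ᶠ[l] I') :
    penaltyFunction I φ lam =ᶠ[l] penaltyFunction I' φ lam :=
  h.mono fun y hy => by rw [penaltyFunction, penaltyFunction, hy]

lemma penaltyFunction_coe (hφx : φ x ≠ ⊤) :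
    penaltyFunction (fun y => (f y : EReal)) φ lam x =
      ((f x + lam * (φ x).toReal : ℝ) : EReal) := by
  rw [penaltyFunction, ← EReal.coe_ennreal_toReal hφx]
  push_cast
  rfl

lemma penaltyFunction_eq_add (hlam₀ : 0 ≤ lam₀) (hlam : lam₀ ≤ lam) :
    penaltyFunction I φ lam x = penaltyFunction I φ lam₀ x + ((lam - lam₀ : ℝ) : EReal) * φ x := by
  rw [penaltyFunction, penaltyFunction, add_assoc,
    ← EReal.right_distrib_of_nonneg (EReal.coe_nonneg.2 hlam₀)
      (EReal.coe_nonneg.2 (sub_nonneg.2 hlam)), ← EReal.coe_add, add_sub_cancel]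

lemma penaltyFunction_mono (hlam₀ : 0 ≤ lam₀) (hlam : lam₀ ≤ lam) :
    penaltyFunction I φ lam₀ x ≤ penaltyFunction I φ lam x := by
  rw [penaltyFunction_eq_add hlam₀ hlam]
  exact le_add_of_nonneg_right
    (mul_nonneg (EReal.coe_nonneg.2 (sub_nonneg.2 hlam)) (EReal.coe_ennreal_nonneg _))

/-- The set `S_λ(c) ∩ Ω_δ`, on which `I` is assumed to be Lipschitz and `φ` to have descent
directions off `Ω`. -/
def nearFeasibleSublevel (I : X → EReal) (φ : X → ℝ≥0∞) (A : Set X) (lam c δ : ℝ) : Set X :=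
  {x | x ∈ A ∧ penaltyFunction I φ lam x < (c : EReal) ∧ φ x < ENNReal.ofReal δ}

lemma mem_nearFeasibleSublevel_of_penaltyFunction_lt {A : Set X} {b c δ : ℝ} (hlam₀ : 0 ≤ lam₀)
    (hlam : lam₀ ≤ lam) (hbc : c - b ≤ (lam - lam₀) * δ) (hxA : x ∈ A)
    (hb : (b : EReal) ≤ penaltyFunction I φ lam₀ x) (hc : penaltyFunction I φ lam x < c) :
    x ∈ nearFeasibleSublevel I φ A lam₀ c δ := by
  refine ⟨hxA, (penaltyFunction_mono hlam₀ hlam).trans_lt hc, ?_⟩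
  by_contra! hδ
  have hδ' : (δ : EReal) ≤ φ x :=
    calc (δ : EReal) ≤ (ENNReal.ofReal δ : EReal) := by
          rw [EReal.coe_ennreal_ofReal]; exact EReal.coe_le_coe_iff.2 (le_max_left _ _)
      _ ≤ φ x := EReal.coe_ennreal_le_coe_ennreal_iff.2 hδ
  refine hc.not_ge ?_
  calc (c : EReal) ≤ ((b + (lam - lam₀) * δ : ℝ) : EReal) := EReal.coe_le_coe_iff.2 (by linarith)
    _ = b + ((lam - lam₀ : ℝ) : EReal) * δ := by push_cast; rfl
    _ ≤ penaltyFunction I φ lam₀ x + ((lam - lam₀ : ℝ) : EReal) * φ x :=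
      add_le_add hb (mul_le_mul_of_nonneg_left hδ' (EReal.coe_nonneg.2 (sub_nonneg.2 hlam)))
    _ = penaltyFunction I φ lam x := (penaltyFunction_eq_add hlam₀ hlam).symm

variable [MetricSpace X] {A V Ω : Set X} {L k : ℝ≥0}

lemma continuousWithinAt_penaltyFunction (hf : ContinuousWithinAt f A x)
    (hφ : ContinuousWithinAt φ A x) (hφx : φ x ≠ ⊤) :
    ContinuousWithinAt (penaltyFunction (fun y => (f y : EReal)) φ lam) A x := by
  have hφ' : ContinuousWithinAt (fun y => (φ y : EReal)) A x :=
    continuous_coe_ennreal_ereal.continuousAt.comp_continuousWithinAt hφ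
  have hf' : ContinuousWithinAt (fun y => (f y : EReal)) A x :=
    continuous_coe_real_ereal.continuousAt.comp_continuousWithinAt hf
  have hφx' : (φ x : EReal) ≠ ⊤ := mt EReal.coe_ennreal_eq_top_iff.1 hφx
  have hmul : ContinuousWithinAt (fun y => (lam : EReal) * φ y) A x :=
    ContinuousAt.comp_continuousWithinAt (f := fun y => ((lam : EReal), (φ y : EReal)))
      (EReal.continuousAt_mul (.inr (EReal.coe_ennreal_ne_bot _)) (.inr hφx')
        (.inl (EReal.coe_ne_bot _)) (.inl (EReal.coe_ne_top _)))
      (continuousWithinAt_const.prodMk hφ')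
  exact ContinuousAt.comp_continuousWithinAt (f := fun y => ((f y : EReal), (lam : EReal) * φ y))
    (EReal.continuousAt_add (.inl (EReal.coe_ne_top _)) (.inl (EReal.coe_ne_bot _)))
    (hf'.prodMk hmul)

lemma rateOfDescent_penaltyFunction_le (hΩA : Ω ⊆ A) (hxΩ : x ∈ Ω) (hφ : ∀ y ∈ Ω, φ y = 0) :
    rateOfDescent (penaltyFunction I φ lam) A x ≤ rateOfDescent I Ω x := by
  refine (rateOfDescent_anti hΩA).trans_eq (rateOfDescent_congr hxΩ ?_)
  filter_upwards [self_mem_nhdsWithin] with y hy using penaltyFunction_of_eq_zero (hφ y hy)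

lemma rateOfDescent_penaltyFunction_lt (hxA : x ∈ A) (hV : V ∈ 𝓝[A] x)
    (hf : LipschitzOnWith L f V) (hlam : 0 < lam) (hφx : φ x ≠ ⊤) {s : ℝ}
    (hdesc : rateOfDescent (fun y => (φ y : EReal)) A x < s) :
    rateOfDescent (penaltyFunction (fun y => (f y : EReal)) φ lam) A x <
      ((L + lam * s : ℝ) : EReal) := by
  obtain ⟨t, hts, ht⟩ := (rateOfDescent_lt_iff (g := fun y => (φ y : EReal))
    (EReal.coe_ennreal_toReal hφx).symm).1 hdesc
  refine (rateOfDescent_lt_iff (penaltyFunction_coe hφx)).2 ⟨L + lam * t, by gcongr, ?_⟩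
  refine (ht.and_eventually hV).mono fun y ⟨hy, hyV⟩ => ?_
  have hφy : φ y ≠ ⊤ := fun htop => by simp [htop] at hy
  rw [← EReal.coe_ennreal_toReal hφy, EReal.coe_lt_coe_iff] at hy
  rw [penaltyFunction_coe hφy, EReal.coe_lt_coe_iff]
  calc f y + lam * (φ y).toReal
      < (f x + L * dist y x) + lam * ((φ x).toReal + t * dist y x) :=
        add_lt_add_of_le_of_lt (hf.le_add_mul hyV (mem_of_mem_nhdsWithin hxA hV))
          (mul_lt_mul_of_pos_left hy hlam)
    _ = f x + lam * (φ x).toReal + (L + lam * t) * dist y x := by ring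

lemma rateOfDescent_penaltyFunction_neg (hxA : x ∈ A) (hV : V ∈ 𝓝[A] x)
    (hf : LipschitzOnWith L f V) (hlam : 0 < lam) (hLk : L ≤ lam * k) (hφx : φ x ≠ ⊤)
    (hdesc : rateOfDescent (fun y => (φ y : EReal)) A x < ((-k : ℝ) : EReal)) :
    rateOfDescent (penaltyFunction (fun y => (f y : EReal)) φ lam) A x < 0 :=
  (rateOfDescent_penaltyFunction_lt hxA hV hf hlam hφx hdesc).trans_le
    (EReal.coe_nonpos.2 (by linarith))

lemma coe_mul_dist_le_coe_ennreal {y z : X} {p : ℝ≥0∞} (h : k * edist z y ≤ p) :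
    ((k * dist z y : ℝ) : EReal) ≤ p :=
  calc ((k * dist z y : ℝ) : EReal) = ((k * edist z y : ℝ≥0∞) : EReal) := by
        rw [edist_nndist, ← ENNReal.coe_mul]; rfl
    _ ≤ p := EReal.coe_ennreal_le_coe_ennreal_iff.2 h

/-- Clarke's exact penalization argument: moving from `y` to a feasible point at distance at most
`φ y / k` costs at most `λ φ y` in `f`. Replacing that point by `x` if `x` is closer to `y` keeps it
within `2 d(y, x)` of `x`, so that stationarity on `Ω` applies to it. -/
lemma rateOfDescent_penaltyFunction_nonneg (hΩA : Ω ⊆ A) (hxΩ : x ∈ Ω) (hφx : φ x = 0)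
    (hV : V ∈ 𝓝[A] x) (hf : LipschitzOnWith L f V) (hlam : 0 ≤ lam) (hLk : L ≤ lam * k)
    (hreg : ∀ᶠ y in 𝓝[A] x, ∃ z ∈ Ω, k * edist z y ≤ φ y)
    (hstat : 0 ≤ rateOfDescent (fun y => (f y : EReal)) Ω x) :
    0 ≤ rateOfDescent (penaltyFunction (fun y => (f y : EReal)) φ lam) A x := by
  rw [← EReal.coe_zero, le_rateOfDescent_iff (g := fun y => (f y : EReal)) rfl] at hstat
  have hΦx : penaltyFunction (fun y => (f y : EReal)) φ lam x = f x :=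
    penaltyFunction_of_eq_zero hφx
  rw [← EReal.coe_zero, le_rateOfDescent_iff hΦx]
  intro t ht
  have hΩ : ∀ᶠ z in 𝓝[Ω] x, f x + t / 2 * dist z x ≤ f z ∧ z ∈ V := by
    filter_upwards [hstat (t / 2) (by linarith), nhdsWithin_mono x hΩA hV] with z hz hzV
    exact ⟨EReal.coe_le_coe_iff.1 hz, hzV⟩
  obtain ⟨R, hR, hΩ⟩ := Metric.mem_nhdsWithin_iff.1 hΩ
  have hball : ∀ᶠ y in 𝓝[A] x, dist y x < R / 2 :=
    mem_nhdsWithin_of_mem_nhds (ball_mem_nhds x (half_pos hR))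
  filter_upwards [hreg, hball, hV] with y hy hyx hyV
  obtain ⟨z, hzΩ, hzφ, hzy⟩ : ∃ z ∈ Ω, k * edist z y ≤ φ y ∧ dist z y ≤ dist y x := by
    obtain ⟨z, hzΩ, hzφ⟩ := hy
    rcases le_total (dist z y) (dist x y) with hzx | hxz
    · exact ⟨z, hzΩ, hzφ, hzx.trans_eq (dist_comm x y)⟩
    · refine ⟨x, hxΩ, le_trans ?_ hzφ, (dist_comm x y).le⟩
      gcongr
      simpa only [edist_dist] using ENNReal.ofReal_le_ofReal hxz
  have hzx : dist z x ≤ 2 * dist y x := by linarith [dist_triangle z y x]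
  obtain ⟨hfz, hzV⟩ := hΩ ⟨mem_ball.2 (by linarith), hzΩ⟩
  have hlower : f x + t * dist y x ≤ f y + lam * (k * dist z y) :=
    calc f x + t * dist y x ≤ f x + t / 2 * dist z x := by nlinarith
      _ ≤ f z := hfz
      _ ≤ f y + L * dist z y := hf.le_add_mul hzV hyV
      _ ≤ f y + lam * k * dist z y := by gcongr
      _ = f y + lam * (k * dist z y) := by ring
  calc ((f x + t * dist y x : ℝ) : EReal) ≤ ((f y + lam * (k * dist z y) : ℝ) : EReal) :=
        EReal.coe_le_coe_iff.2 hlower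
    _ = f y + (lam : EReal) * ((k * dist z y : ℝ) : EReal) := by
      rw [EReal.coe_add, EReal.coe_mul lam]
    _ ≤ penaltyFunction (fun y => (f y : EReal)) φ lam y :=
      add_le_add le_rfl
        (mul_le_mul_of_nonneg_left (coe_mul_dist_le_coe_ennreal hzφ) (EReal.coe_nonneg.2 hlam))

lemma eventually_mem_nearFeasibleSublevel {c δ : ℝ} (hx : x ∈ nearFeasibleSublevel I φ A lam c δ)
    (hIf : I =ᶠ[𝓝[A] x] fun y => (f y : EReal)) (hf : ContinuousWithinAt f A x)
    (hφ : ContinuousWithinAt φ A x) :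
    ∀ᶠ z in 𝓝[A] x, z ∈ nearFeasibleSublevel I φ A lam c δ := by
  obtain ⟨hxA, hxc, hxδ⟩ := hx
  have hcont : ContinuousWithinAt (penaltyFunction I φ lam) A x :=
    (continuousWithinAt_penaltyFunction hf hφ hxδ.ne_top).congr_of_eventuallyEq
      (penaltyFunction_congr hIf) (penaltyFunction_congr hIf |>.eq_of_nhdsWithin hxA)
  filter_upwards [self_mem_nhdsWithin, hcont.eventually_lt_const hxc, hφ.eventually_lt_const hxδ]
    with z hzA hzc hzδ using ⟨hzA, hzc, hzδ⟩

lemma rateOfDescent_penaltyFunction_nonneg_iff {M : Set X} {c δ : ℝ} (hA : IsComplete A)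
    (hφM : ∀ x, φ x = 0 ↔ x ∈ M) (hφlsc : LowerSemicontinuousOn φ A)
    (hφcont : ∀ x ∈ M ∩ A, ContinuousWithinAt φ A x) (hIf : ∀ y ∈ V, I y = f y)
    (hf : LipschitzOnWith L f V) (hk : k ≠ 0)
    (hdesc : ∀ z ∈ nearFeasibleSublevel I φ A lam₀ c δ, φ z ≠ 0 →
      rateOfDescent (fun y => (φ y : EReal)) A z < ((-k : ℝ) : EReal))
    (hlam : 0 < lam) (hLk : L ≤ lam * k) (hx : x ∈ nearFeasibleSublevel I φ A lam₀ c δ)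
    (hV : V ∈ 𝓝[A] x) :
    0 ≤ rateOfDescent (penaltyFunction I φ lam) A x ↔
      x ∈ M ∩ A ∧ 0 ≤ rateOfDescent I (M ∩ A) x := by
  have hxA : x ∈ A := hx.1
  have hIfx : I =ᶠ[𝓝[A] x] fun y => (f y : EReal) := mem_of_superset hV hIf
  have hrate : rateOfDescent (penaltyFunction I φ lam) A x =
      rateOfDescent (penaltyFunction (fun y => (f y : EReal)) φ lam) A x :=
    rateOfDescent_congr hxA (penaltyFunction_congr hIfx)
  constructor
  · intro hstat
    have hφx : φ x = 0 := by
      by_contra hφx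
      rw [hrate] at hstat
      exact hstat.not_gt
        (rateOfDescent_penaltyFunction_neg hxA hV hf hlam hLk hx.2.2.ne_top (hdesc x hx hφx))
    have hxΩ : x ∈ M ∩ A := ⟨(hφM x).1 hφx, hxA⟩
    exact ⟨hxΩ, hstat.trans
      (rateOfDescent_penaltyFunction_le inter_subset_right hxΩ fun y hy => (hφM y).2 hy.1)⟩
  · rintro ⟨hxΩ, hstat⟩
    have hφx : φ x = 0 := (hφM x).2 hxΩ.1
    have hfx : ContinuousWithinAt f A x :=
      (hf.continuousOn x (mem_of_mem_nhdsWithin hxA hV)).mono_of_mem_nhdsWithin hV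
    have hreg := eventually_exists_zero_mul_edist_le_of_rateOfDescent_lt hA hφlsc hk hφx
      (hφcont x hxΩ)
      ((eventually_mem_nearFeasibleSublevel hx hIfx hfx (hφcont x hxΩ)).mono hdesc)
    rw [rateOfDescent_congr hxΩ (hIfx.filter_mono (nhdsWithin_mono x inter_subset_right))] at hstat
    rw [hrate]
    refine rateOfDescent_penaltyFunction_nonneg inter_subset_right hxΩ hφx hV hf hlam.le hLk
      (hreg.mono ?_) hstat
    rintro y ⟨z, hzA, hφz, hzy⟩
    exact ⟨z, ⟨(hφM z).1 hφz, hzA⟩, hzy⟩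

end Penalty

theorem exact_penalty_inf_stationary_points_general {X : Type*} [MetricSpace X]
    {M A V : Set X} (hA : IsComplete A) {I : X → EReal} {f : X → ℝ} {φ : X → ℝ≥0∞}
    (hφM : ∀ x, φ x = 0 ↔ x ∈ M) (hφlsc : LowerSemicontinuousOn φ A)
    (hφcont : ∀ x ∈ M ∩ A, ContinuousWithinAt φ A x)
    {c lam₀ δ : ℝ} (hlam₀ : 0 < lam₀) (hδ : 0 < δ) (hV : IsOpen V)
    (hSV : nearFeasibleSublevel I φ A lam₀ c δ ⊆ V) (hIf : ∀ x ∈ V, I x = f x)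
    {L : ℝ≥0} (hf : LipschitzOnWith L f V) {a : ℝ} (ha : 0 < a)
    (hdesc : ∀ x ∈ nearFeasibleSublevel I φ A lam₀ c δ \ (M ∩ A),
      rateOfDescent (fun y => (φ y : EReal)) A x ≤ ((-a : ℝ) : EReal))
    {b : ℝ} (hb : ∀ x ∈ A, (b : EReal) ≤ penaltyFunction I φ lam₀ x) :
    ∃ lamStar : ℝ, 0 ≤ lamStar ∧ ∀ lam : ℝ, lamStar ≤ lam →
      ∀ x, x ∈ A → penaltyFunction I φ lam x < (c : EReal) →
        ((0 : EReal) ≤ rateOfDescent (penaltyFunction I φ lam) A x ↔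
          (x ∈ M ∩ A ∧ (0 : EReal) ≤ rateOfDescent I (M ∩ A) x)) := by
  obtain ⟨k, hk, hka⟩ : ∃ k : ℝ≥0, 0 < k ∧ (k : ℝ) < a := by
    lift a to ℝ≥0 using ha.le
    exact_mod_cast exists_between (NNReal.coe_pos.1 ha)
  have hdesc' : ∀ x ∈ nearFeasibleSublevel I φ A lam₀ c δ, φ x ≠ 0 →
      rateOfDescent (fun y => (φ y : EReal)) A x < ((-k : ℝ) : EReal) := fun x hx hφx =>
    (hdesc x ⟨hx, fun hxM => hφx ((hφM x).2 hxM.1)⟩).trans_lt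
      (EReal.coe_lt_coe_iff.2 (neg_lt_neg hka))
  refine ⟨max (lam₀ + |c - b| / δ) (L / k), by positivity, fun lam hlam x hxA hxc => ?_⟩
  obtain ⟨hlamδ, hlamk⟩ := max_le_iff.1 hlam
  have hlam₀lam : lam₀ ≤ lam := le_trans (le_add_of_nonneg_right (by positivity)) hlamδ
  have hcb : c - b ≤ (lam - lam₀) * δ :=
    (le_abs_self _).trans ((div_le_iff₀ hδ).1 (le_sub_iff_add_le'.2 hlamδ))
  have hxS : x ∈ nearFeasibleSublevel I φ A lam₀ c δ :=
    mem_nearFeasibleSublevel_of_penaltyFunction_lt hlam₀.le hlam₀lam hcb hxA (hb x hxA) hxc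
  exact rateOfDescent_penaltyFunction_nonneg_iff hA hφM hφlsc hφcont hIf hf hk.ne' hdesc'
    (hlam₀.trans_le hlam₀lam) ((div_le_iff₀ (NNReal.coe_pos.2 hk)).1 hlamk) hxS
    (mem_nhdsWithin_of_mem_nhds (hV.mem_nhds (hSV hxS)))

/-- Main theorem, part 4: for all sufficiently large `λ`, a point `x* ∈ S_λ(c)` is an
inf-stationary point of `Φ_λ` on `A` iff `x* ∈ Ω` and it is an inf-stationary point of `I`
on `Ω`. -/
theorem exact_penalty_inf_stationary_points
    {X : Type*} [MetricSpace X] [CompleteSpace X]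
    (M A : Set X) (hA : IsClosed A)
    (I : X → EReal) (hInotbot : ∀ x, I x ≠ ⊥)
    (φ : X → ℝ≥0∞) (hφM : ∀ x, φ x = 0 ↔ x ∈ M)
    (Φ : ℝ → X → EReal)
    (hΦdef : ∀ lam x, Φ lam x = I x + (lam : EReal) * ((φ x : ℝ≥0∞) : EReal))
    (hIlsc : LowerSemicontinuousOn I A) (hφlsc : LowerSemicontinuousOn φ A)
    (hφcont : ∀ x ∈ M ∩ A, ContinuousAt φ x)
    -- the problem (P) has a globally optimal solution with finite optimal value
    (xs : X) (hxs : xs ∈ M ∩ A) (hxsmin : ∀ y ∈ M ∩ A, I xs ≤ I y) (hxsfin : I xs ≠ ⊤)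
    (c lam₀ δ : ℝ) (hc : I xs < ((c : ℝ) : EReal)) (hlam₀ : 0 < lam₀) (hδ : 0 < δ)
    -- (i) `I` is Lipschitz continuous on an open set containing `S_{λ₀}(c) ∩ Ω_δ`
    (hLip : ∃ (V : Set X) (L : ℝ≥0), IsOpen V ∧
      {x | x ∈ A ∧ Φ lam₀ x < ((c : ℝ) : EReal) ∧ φ x < ENNReal.ofReal δ} ⊆ V ∧
      (∀ x ∈ V, I x ≠ ⊤) ∧ LipschitzOnWith L (fun x => (I x).toReal) V)
    -- (ii) the rate of steepest descent of `φ` w.r.t. `A` is ≤ −a < 0 on `S_{λ₀}(c) ∩ (Ω_δ \ Ω)`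
    (hdesc : ∃ a : ℝ, 0 < a ∧
      ∀ x ∈ {x | x ∈ A ∧ Φ lam₀ x < ((c : ℝ) : EReal) ∧ φ x < ENNReal.ofReal δ} \ (M ∩ A),
        rateOfDescent (fun y => ((φ y : ℝ≥0∞) : EReal)) A x ≤ ((-a : ℝ) : EReal))
    -- (iii) `Φ_{λ₀}` is bounded below on `A`
    (hbdd : ∃ b : ℝ, ∀ x ∈ A, ((b : ℝ) : EReal) ≤ Φ lam₀ x) :
    ∃ lamStar : ℝ, 0 ≤ lamStar ∧ ∀ lam : ℝ, lamStar ≤ lam →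
      ∀ x, x ∈ A → Φ lam x < ((c : ℝ) : EReal) →
        ((0 : EReal) ≤ rateOfDescent (Φ lam) A x ↔
          (x ∈ M ∩ A ∧ (0 : EReal) ≤ rateOfDescent I (M ∩ A) x)) := by
  obtain rfl : Φ = penaltyFunction I φ := funext₂ hΦdef
  obtain ⟨V, L, hV, hSV, hVtop, hL⟩ := hLip
  obtain ⟨a, ha, hdesc⟩ := hdesc
  obtain ⟨b, hb⟩ := hbdd
  exact exact_penalty_inf_stationary_points_general hA.isComplete hφM hφlsc
    (fun x hx => (hφcont x hx).continuousWithinAt) hlam₀ hδ hV hSV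
    (fun x hx => (EReal.coe_toReal (hVtop x hx) (hInotbot x)).symm) hL ha hdesc hb
end

section
/- Suppose X is complete, A is closed, I and φ are lower semicontinuous on A, φ is continuous at every point of Ω, and there exist c > I*, λ₀ > 0 and δ > 0 such that (i) I is Lipschitz continuous on an open set containing S_{λ₀}(c) ∩ Ω_δ, (ii) there exists a > 0 such that φ↓_A(x) ≤ −a for all x ∈ S_{λ₀}(c) ∩ (Ω_δ \ Ω), and (iii) Φ_{λ₀} is bounded below on A. Then for any x₀ ∈ S_{λ₀}(c) ∩ Ω there exists r > 0 such that φ(x) ≥ a·dist(x,Ω) for all x ∈ B(x₀,r) ∩ A, where B(x₀,r) = {y ∈ X : d(y,x₀) ≤ r} and dist(x,Ω) = inf_{y∈Ω} d(x,y). -/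
open Filter Metric Set Topology
open scoped ENNReal NNReal

/-!
If `φ` is not `≥ a * r` at `x`, then `φ x < b * r` for some `b < a`, and Ekeland's variational
principle for `φ` on `A` yields a point `y` with `dist x y < r` at which `φ` cannot decrease at rate
`b`; so the descent rate of `φ` at `y` is not `≤ -a`. Near `x₀ ∈ Ω` this is applied with
`r = dist (x, Ω)`, which keeps `y` off `Ω` and, by semicontinuity, inside `S_{λ₀}(c) ∩ Ω_δ`.
-/

section Ekeland

variable {X : Type*} [EMetricSpace X] {A : Set X} {φ : X → ℝ≥0∞} {b : ℝ≥0} {u v x : X}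

/-- The points of `A` that lie below `u` in Ekeland's order: `φ` drops from `u` to them by at least
`b` times the distance from `u`. Ekeland's variational principle is about its minimal elements. -/
def ekelandSet (φ : X → ℝ≥0∞) (A : Set X) (b : ℝ≥0) (u : X) : Set X :=
  {z | z ∈ A ∧ φ z + b * edist u z ≤ φ u}

namespace ekelandSet

lemma self_mem (hu : u ∈ A) : u ∈ ekelandSet φ A b u :=
  ⟨hu, by simp⟩

lemma le_of_mem (hv : v ∈ ekelandSet φ A b u) : φ v ≤ φ u :=
  le_self_add.trans hv.2

lemma subset_of_mem (hv : v ∈ ekelandSet φ A b u) : ekelandSet φ A b v ⊆ ekelandSet φ A b u := by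
  refine fun w hw => ⟨hw.1, ?_⟩
  calc φ w + b * edist u w
      ≤ φ w + b * (edist u v + edist v w) := by gcongr; exact edist_triangle u v w
    _ = φ w + b * edist v w + b * edist u v := by ring
    _ ≤ φ v + b * edist u v := by gcongr; exact hw.2
    _ ≤ φ u := hv.2

lemma isClosed (hA : IsClosed A) (hφ : LowerSemicontinuousOn φ A) :
    IsClosed (ekelandSet φ A b u) := by
  have hdist : Continuous fun z => b * edist u z :=
    (ENNReal.continuous_const_mul ENNReal.coe_ne_top).comp (by fun_prop)
  have hsum : LowerSemicontinuousOn (fun z => φ z + b * edist u z) A :=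
    hφ.add (hdist.lowerSemicontinuous.lowerSemicontinuousOn A)
  exact ((lowerSemicontinuousOn_iff_isClosed_epigraph hA).1 hsum).preimage
    (Continuous.prodMk_left (φ u))

lemma exists_mem_forall_edist_le (hb : b ≠ 0) (hu : u ∈ A) (hφu : φ u ≠ ⊤) {ε : ℝ≥0∞}
    (hε : ε ≠ 0) :
    ∃ v ∈ ekelandSet φ A b u, ∀ z ∈ ekelandSet φ A b v, edist v z ≤ ε := by
  have hb' : (b : ℝ≥0∞) ≠ 0 := ENNReal.coe_ne_zero.2 hb
  have hinf : ⨅ z ∈ ekelandSet φ A b u, φ z ≠ ⊤ :=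
    ne_top_of_le_ne_top hφu (iInf₂_le u (self_mem hu))
  obtain ⟨v, hv, hφv⟩ : ∃ v ∈ ekelandSet φ A b u,
      φ v < (⨅ z ∈ ekelandSet φ A b u, φ z) + b * ε := by
    simpa only [iInf_lt_iff, exists_prop] using ENNReal.lt_add_right hinf (mul_ne_zero hb' hε)
  refine ⟨v, hv, fun z hz => ?_⟩
  have hφz : φ z ≠ ⊤ := ne_top_of_le_ne_top hφu ((le_of_mem hz).trans (le_of_mem hv))
  have hle : φ z + b * edist v z ≤ φ z + b * ε :=
    calc φ z + b * edist v z ≤ φ v := hz.2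
      _ ≤ (⨅ z ∈ ekelandSet φ A b u, φ z) + b * ε := hφv.le
      _ ≤ φ z + b * ε := by gcongr; exact iInf₂_le z (subset_of_mem hv hz)
  exact (ENNReal.mul_le_mul_iff_right hb' ENNReal.coe_ne_top).1
    ((ENNReal.add_le_add_iff_left hφz).1 hle)

lemma exists_seq_edist_le_geometric (hb : b ≠ 0) (hx : x ∈ A) (hφx : φ x ≠ ⊤) :
    ∃ u : ℕ → X, u 0 ∈ ekelandSet φ A b x ∧ (∀ n, u (n + 1) ∈ ekelandSet φ A b (u n)) ∧
      ∀ n, ∀ z ∈ ekelandSet φ A b (u n), edist (u n) z ≤ 2⁻¹ ^ n := by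
  have hstep (n : ℕ) (w : {w // w ∈ A ∧ φ w ≠ ⊤}) : ∃ v : {w // w ∈ A ∧ φ w ≠ ⊤},
      v.1 ∈ ekelandSet φ A b w ∧ ∀ z ∈ ekelandSet φ A b v, edist v.1 z ≤ 2⁻¹ ^ n := by
    obtain ⟨v, hv, hdist⟩ := exists_mem_forall_edist_le hb w.2.1 w.2.2
      (pow_ne_zero n (ENNReal.inv_ne_zero.2 ENNReal.ofNat_ne_top) : (2⁻¹ : ℝ≥0∞) ^ n ≠ 0)
    exact ⟨⟨v, hv.1, ne_top_of_le_ne_top w.2.2 (le_of_mem hv)⟩, hv, hdist⟩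
  choose next hnext hdist using hstep
  let s : ℕ → {w // w ∈ A ∧ φ w ≠ ⊤} := Nat.rec ⟨x, hx, hφx⟩ next
  exact ⟨fun n => s (n + 1), hnext 0 (s 0), fun n => hnext (n + 1) (s (n + 1)),
    fun n => hdist n (s n)⟩

end ekelandSet

open ekelandSet in
theorem exists_ekelandSet_eq_singleton (hA : IsComplete A) (hφ : LowerSemicontinuousOn φ A)
    (hb : b ≠ 0) (hx : x ∈ A) (hφx : φ x ≠ ⊤) :
    ∃ y ∈ ekelandSet φ A b x, ekelandSet φ A b y = {y} := by
  obtain ⟨u, hux, hu, hdist⟩ := exists_seq_edist_le_geometric hb hx hφx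
  have hanti : Antitone fun n => ekelandSet φ A b (u n) :=
    antitone_nat_of_succ_le fun n => subset_of_mem (hu n)
  have huA (n : ℕ) : u n ∈ A := n.casesOn hux.1 fun k => (hu k).1
  have hcauchy : CauchySeq u :=
    cauchySeq_of_edist_le_geometric 2⁻¹ 1 (by simp) (by simp) fun n => by
      simpa only [one_mul] using hdist n _ (hu n)
  obtain ⟨y, -, hy⟩ := cauchySeq_tendsto_of_isComplete hA huA hcauchy
  have hyu (n : ℕ) : y ∈ ekelandSet φ A b (u n) :=
    (isClosed hA.isClosed hφ).mem_of_tendsto hy <|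
      (eventually_ge_atTop n).mono fun m hnm => hanti hnm (self_mem (huA m))
  refine ⟨y, subset_of_mem hux (hyu 0), eq_singleton_iff_unique_mem.2
    ⟨self_mem (hyu 0).1, fun z hz => tendsto_nhds_unique ?_ hy⟩⟩
  have hzero : Tendsto (fun n : ℕ => (2⁻¹ : ℝ≥0∞) ^ n) atTop (𝓝 0) :=
    ENNReal.tendsto_pow_atTop_nhds_zero_of_lt_one (by simp)
  exact tendsto_iff_edist_tendsto_0.2 <| tendsto_of_tendsto_of_tendsto_of_le_of_le
    tendsto_const_nhds hzero (fun _ => zero_le) fun n => hdist n z (subset_of_mem (hyu n) hz)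

end Ekeland

section Descent

variable {X : Type*} [MetricSpace X] {A : Set X} {φ : X → ℝ≥0∞} {x : X}

lemma exists_sub_mul_inv_dist_lt_of_rateOfDescent_lt {g : X → EReal} {r : EReal}
    (h : rateOfDescent g A x < r) :
    ∃ z ∈ A, z ≠ x ∧ (g z - g x) * (((dist z x)⁻¹ : ℝ) : EReal) < r := by
  have hfreq := frequently_lt_of_liminf_lt (by isBoundedDefault) h
  obtain ⟨z, hz, hzA, hzx⟩ := (hfreq.and_eventually self_mem_nhdsWithin).exists
  exact ⟨z, hzA, hzx, hz⟩

lemma add_mul_edist_le_of_sub_mul_inv_dist_lt {p q : ℝ≥0∞} (hq : q ≠ ⊤) {b : ℝ≥0} {z : X}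
    (hzx : z ≠ x)
    (h : ((p : EReal) - (q : EReal)) * (((dist z x)⁻¹ : ℝ) : EReal) < ((-b : ℝ) : EReal)) :
    p + b * edist x z ≤ q := by
  have hpos : 0 < dist z x := dist_pos.2 hzx
  lift q to ℝ≥0 using hq
  have hp : p ≠ ⊤ := by
    rintro rfl
    rw [EReal.coe_ennreal_top, EReal.coe_nnreal_eq_coe_real, EReal.top_sub_coe,
      EReal.top_mul_coe_of_pos (inv_pos.2 hpos)] at h
    exact not_top_lt h
  lift p to ℝ≥0 using hp
  have hdrop : (p : ℝ) - q < -b * dist x z := by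
    rwa [EReal.coe_nnreal_eq_coe_real, EReal.coe_nnreal_eq_coe_real, ← EReal.coe_sub,
      ← EReal.coe_mul, EReal.coe_lt_coe_iff, ← div_eq_mul_inv, div_lt_iff₀ hpos, dist_comm] at h
  have hle : (p : ℝ) + b * nndist x z ≤ q := by
    rw [coe_nndist]
    linarith
  rw [edist_nndist]
  exact_mod_cast hle

lemma ekelandSet_ne_singleton_of_rateOfDescent_lt (hφx : φ x ≠ ⊤) {b : ℝ≥0}
    (h : rateOfDescent (fun y => (φ y : EReal)) A x < ((-b : ℝ) : EReal)) :
    ekelandSet φ A b x ≠ {x} := by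
  obtain ⟨z, hzA, hzx, hz⟩ := exists_sub_mul_inv_dist_lt_of_rateOfDescent_lt h
  have hmem : z ∈ ekelandSet φ A b x :=
    ⟨hzA, add_mul_edist_le_of_sub_mul_inv_dist_lt hφx hzx hz⟩
  exact fun heq => hzx (heq.subset hmem)

theorem ofReal_mul_le_of_rateOfDescent_le (hA : IsComplete A) (hφ : LowerSemicontinuousOn φ A)
    (hx : x ∈ A) {a : ℝ} {r : ℝ≥0∞}
    (h : ∀ y ∈ A, edist x y < r →
      rateOfDescent (fun y => (φ y : EReal)) A y ≤ ((-a : ℝ) : EReal)) :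
    ENNReal.ofReal a * r ≤ φ x := by
  by_contra! hlt
  have hr : r ≠ 0 := by rintro rfl; simp at hlt
  obtain ⟨b, hφb, hba⟩ : ∃ b : ℝ≥0, φ x < b * r ∧ (b : ℝ) < a := by
    have hdiv := (ENNReal.div_lt_iff (.inl hr) (.inr hlt.ne_top)).2 hlt
    obtain ⟨b, hφb, hba⟩ := ENNReal.lt_iff_exists_nnreal_btwn.1 hdiv
    exact ⟨b, (ENNReal.div_lt_iff (.inl hr) (.inr hlt.ne_top)).1 hφb,
      Real.lt_toNNReal_iff_coe_lt.1 (ENNReal.coe_lt_coe.1 hba)⟩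
  have hb : b ≠ 0 := by rintro rfl; simp at hφb
  obtain ⟨y, hy, hymin⟩ := exists_ekelandSet_eq_singleton hA hφ hb hx hlt.ne_top
  have hxy : edist x y < r :=
    lt_of_mul_lt_mul_left' ((le_add_self.trans hy.2).trans_lt hφb)
  have hrate := (h y hy.1 hxy).trans_lt (EReal.coe_lt_coe_iff.2 (neg_lt_neg hba))
  exact ekelandSet_ne_singleton_of_rateOfDescent_lt
    (ne_top_of_le_ne_top hlt.ne_top (ekelandSet.le_of_mem hy)) hrate hymin

theorem exists_pos_ofReal_mul_infDist_le_of_eventually_rateOfDescent_le (hA : IsComplete A)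
    (hφ : LowerSemicontinuousOn φ A) {Ω : Set X} (hxΩ : x ∈ Ω) {a : ℝ}
    (h : ∀ᶠ y in 𝓝[A] x, y ∉ Ω →
      rateOfDescent (fun y => (φ y : EReal)) A y ≤ ((-a : ℝ) : EReal)) :
    ∃ r : ℝ, 0 < r ∧ ∀ y ∈ closedBall x r ∩ A, ENNReal.ofReal (a * infDist y Ω) ≤ φ y := by
  obtain ⟨ρ, hρ, hball⟩ := Metric.mem_nhdsWithin_iff.1 h
  refine ⟨ρ / 2, half_pos hρ, fun y ⟨hyx, hyA⟩ => ?_⟩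
  rw [ENNReal.ofReal_mul' infDist_nonneg]
  refine ofReal_mul_le_of_rateOfDescent_le hA hφ hyA fun z hzA hyz => ?_
  rw [edist_lt_ofReal] at hyz
  have hzx : dist z x < ρ :=
    calc dist z x ≤ dist y z + dist y x := dist_triangle_left z x y
      _ < infDist y Ω + dist y x := by gcongr
      _ ≤ dist y x + dist y x := by gcongr; exact infDist_le_dist_of_mem hxΩ
      _ ≤ ρ / 2 + ρ / 2 := by gcongr <;> exact hyx
      _ = ρ := add_halves ρ
  exact hball ⟨hzx, hzA⟩ fun hzΩ => hyz.not_ge (infDist_le_dist_of_mem hzΩ)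

end Descent

lemma continuousAt_of_continuousAt_toReal {X : Type*} [TopologicalSpace X] {f : X → EReal} {x : X}
    (hfin : ∀ᶠ y in 𝓝 x, f y ≠ ⊤ ∧ f y ≠ ⊥) (h : ContinuousAt (fun y => (f y).toReal) x) :
    ContinuousAt f x :=
  (continuous_coe_real_ereal.continuousAt.comp h).congr <|
    hfin.mono fun _ hy => EReal.coe_toReal hy.1 hy.2

lemma upperSemicontinuousWithinAt_add_const_mul {X : Type*} [TopologicalSpace X] {A : Set X}
    {I : X → EReal} {φ : X → ℝ≥0∞} {x : X} (hI : UpperSemicontinuousWithinAt I A x)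
    (hφ : ContinuousWithinAt φ A x) (hφx : φ x ≠ ⊤) (lam : ℝ) :
    UpperSemicontinuousWithinAt (fun y => I y + (lam : EReal) * (φ y : EReal)) A x := by
  have hmul : ContinuousWithinAt (fun y => (lam : EReal) * (φ y : EReal)) A x :=
    EReal.Tendsto.const_mul ((continuous_coe_ennreal_ereal.tendsto _).comp hφ)
      (.inl (EReal.coe_ne_bot lam)) (.inl (EReal.coe_ne_top lam))
  have hreal : (lam : EReal) * (φ x : EReal) = ((lam * (φ x).toReal : ℝ) : EReal) := by
    rw [EReal.coe_mul, EReal.coe_ennreal_toReal hφx]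
  refine hI.add' hmul.upperSemicontinuousWithinAt (EReal.continuousAt_add ?_ ?_)
  · exact .inr (hreal ▸ EReal.coe_ne_bot _)
  · exact .inr (hreal ▸ EReal.coe_ne_top _)

theorem exact_penalty_metric_subregularity_general {X : Type*} [MetricSpace X] {A Ω : Set X}
    (hA : IsComplete A) {I : X → EReal} {φ : X → ℝ≥0∞} (hφlsc : LowerSemicontinuousOn φ A)
    {c lam₀ δ a : ℝ}
    (hdesc : ∀ x ∈ {x | x ∈ A ∧ I x + (lam₀ : EReal) * (φ x : EReal) < (c : EReal) ∧
        φ x < ENNReal.ofReal δ} \ Ω,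
      rateOfDescent (fun y => (φ y : EReal)) A x ≤ ((-a : ℝ) : EReal))
    {x₀ : X} (hx₀ : x₀ ∈ {x | x ∈ A ∧ I x + (lam₀ : EReal) * (φ x : EReal) < (c : EReal) ∧
        φ x < ENNReal.ofReal δ} ∩ Ω)
    (hI : UpperSemicontinuousWithinAt I A x₀) (hφ : ContinuousWithinAt φ A x₀) :
    ∃ r : ℝ, 0 < r ∧ ∀ x ∈ closedBall x₀ r ∩ A,
      ENNReal.ofReal (a * infDist x Ω) ≤ φ x := by
  obtain ⟨⟨-, hx₀c, hx₀δ⟩, hx₀Ω⟩ := hx₀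
  have hΦ := upperSemicontinuousWithinAt_add_const_mul hI hφ hx₀δ.ne_top lam₀
  refine exists_pos_ofReal_mul_infDist_le_of_eventually_rateOfDescent_le hA hφlsc hx₀Ω ?_
  filter_upwards [self_mem_nhdsWithin, hΦ c hx₀c, hφ.eventually_lt_const hx₀δ]
    with y hyA hyc hyδ hyΩ
  exact hdesc y ⟨⟨hyA, hyc, hyδ⟩, hyΩ⟩

/-- Lemma A.1 (metric subregularity): under the assumptions of the main theorem, for any
`x₀ ∈ S_{λ₀}(c) ∩ Ω` there exists `r > 0` such that `φ(x) ≥ a · dist(x, Ω)` for all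
`x ∈ B(x₀, r) ∩ A`. -/
theorem exact_penalty_metric_subregularity
    {X : Type*} [MetricSpace X] [CompleteSpace X]
    (M A : Set X) (hA : IsClosed A)
    (I : X → EReal) (hInotbot : ∀ x, I x ≠ ⊥)
    (φ : X → ℝ≥0∞) (hφM : ∀ x, φ x = 0 ↔ x ∈ M)
    (Φ : ℝ → X → EReal)
    (hΦdef : ∀ lam x, Φ lam x = I x + (lam : EReal) * ((φ x : ℝ≥0∞) : EReal))
    (hIlsc : LowerSemicontinuousOn I A) (hφlsc : LowerSemicontinuousOn φ A)
    (hφcont : ∀ x ∈ M ∩ A, ContinuousAt φ x)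
    -- the problem (P) has a globally optimal solution with finite optimal value
    (xs : X) (hxs : xs ∈ M ∩ A) (hxsmin : ∀ y ∈ M ∩ A, I xs ≤ I y) (hxsfin : I xs ≠ ⊤)
    (c lam₀ δ : ℝ) (hc : I xs < ((c : ℝ) : EReal)) (hlam₀ : 0 < lam₀) (hδ : 0 < δ)
    -- (i) `I` is Lipschitz continuous on an open set containing `S_{λ₀}(c) ∩ Ω_δ`
    (hLip : ∃ (V : Set X) (L : ℝ≥0), IsOpen V ∧
      {x | x ∈ A ∧ Φ lam₀ x < ((c : ℝ) : EReal) ∧ φ x < ENNReal.ofReal δ} ⊆ V ∧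
      (∀ x ∈ V, I x ≠ ⊤) ∧ LipschitzOnWith L (fun x => (I x).toReal) V)
    -- (ii) the rate of steepest descent of `φ` w.r.t. `A` is ≤ −a < 0 on `S_{λ₀}(c) ∩ (Ω_δ \ Ω)`
    (a : ℝ) (ha : 0 < a)
    (hdesc : ∀ x ∈ {x | x ∈ A ∧ Φ lam₀ x < ((c : ℝ) : EReal) ∧ φ x < ENNReal.ofReal δ} \ (M ∩ A),
        rateOfDescent (fun y => ((φ y : ℝ≥0∞) : EReal)) A x ≤ ((-a : ℝ) : EReal))
    -- (iii) `Φ_{λ₀}` is bounded below on `A`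
    (hbdd : ∃ b : ℝ, ∀ x ∈ A, ((b : ℝ) : EReal) ≤ Φ lam₀ x) :
    ∀ x₀ ∈ {x | x ∈ A ∧ Φ lam₀ x < ((c : ℝ) : EReal) ∧ φ x < ENNReal.ofReal δ} ∩ (M ∩ A),
      ∃ r : ℝ, 0 < r ∧ ∀ x ∈ Metric.closedBall x₀ r ∩ A,
        ENNReal.ofReal (a * Metric.infDist x (M ∩ A)) ≤ φ x := by
  obtain ⟨V, L, hV, hSV, hVtop, hVL⟩ := hLip
  obtain rfl : Φ = fun (lam : ℝ) x => I x + (lam : EReal) * (φ x : EReal) := funext₂ hΦdef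
  intro x₀ hx₀
  have hVx₀ : V ∈ 𝓝 x₀ := hV.mem_nhds (hSV hx₀.1)
  have hI : ContinuousAt I x₀ := continuousAt_of_continuousAt_toReal
    (Filter.mem_of_superset hVx₀ fun x hx => ⟨hVtop x hx, hInotbot x⟩)
    (hVL.continuousOn.continuousAt hVx₀)
  exact exact_penalty_metric_subregularity_general hA.isComplete hφlsc hdesc hx₀
    hI.continuousWithinAt.upperSemicontinuousWithinAt (hφcont x₀ hx₀.2).continuousWithinAt
end
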